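/- Let M be a commutative associative ℂ-algebra, E : M → ℂ a linear functional, and let W_n : M^n → Γ(M) be the multilinear maps determined by W() = 1 and the recursion W(a₁,…,a_{n+1}) = W(a₁,…,a_n)·X(a_{n+1}) − E(a_{n+1})·W(a₁,…,a_n) − Σ_{i=1}^n W(a₁,…,â_i,…,a_n, a_i a_{n+1}) − Σ_{i=1}^n W(a₁,…,â_i,…,a_n, a_{n+1} a_i) − Σ_{i=1}^n E(a_i a_{n+1})·W(a₁,…,â_i,…,a_n) − Σ_{1≤i<j≤n} W(a₁,…,â_i,…,â_j,…,a_n, a_i a_{n+1} a_j) − Σ_{1≤i<j≤n} W(a₁,…,â_i,…,â_j,…,a_n, a_j a_{n+1} a_i), where â_i means a_i is omitted and newly formed products are appended as the last argument. Then for all a₁,…,a_n ∈ M: X(a₁)X(a₂)⋯X(a_n) = Σ_{(π,S) ∈ IP(n)} (Π_{U ∈ π∖S} (|U|−1)! · E(a_U)) · (Π_{V ∈ S} |V|!) · W(a_{V₁},…,a_{V_m}), where V₁,…,V_m are the open blocks of (π,S) listed in increasing order of their largest elements. -/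

import Mathlib

/-!
The proof is by induction on initial segments `s` of `Fin n`. Let `m` be the next index. Multiply
the expansion for `s` by `X (a m)` and expand each product `W(…) X (a m)` with the recursion for
`W` (`wick_rec`). The terms make `m` a singleton block (open or closed), add `m` to an open block
`V` (leaving it open, twice, or closing it), or merge an ordered pair of distinct open blocks
with `m`.
In each term, the result is an incomplete partition of `insert m s` in which the block of `m` is
`insert m U` for some `U ⊆ s`, and the new product is rightly the last argument because `m` is the
largest index.

For fixed `U` with `k = |U| ≥ 1` and fixed other blocks, closing `U` gives the coefficient
`k! = ((k + 1) - 1)!` required for a closed block. For an open block, the two terms that add `m`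
to `U` give `2 k!` and the pairs `V ⊔ V' = U` give `∑ |V|! |V'|! = (k - 1) k!`, which together make
`(k + 1)!` (`sum_factorial`). The reindexings are `sum_open` (removing a distinguished open
block), `sum_insert_IP` (sorting by the block of `m`) and `sum_pairs` (sorting by `V ∪ V'`).
The order of the arguments is controlled by `blockList_erase` and `blockList_insert`.
-/

open Finset
open scoped Classical

noncomputable section

/-- A partition of `Fin n`, given by its (finite) set of blocks. -/
def IsPartition {n : ℕ} (P : Finset (Finset (Fin n))) : Prop :=
  (∀ B ∈ P, B.Nonempty) ∧ ∀ i : Fin n, ∃! B : Finset (Fin n), B ∈ P ∧ i ∈ B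

/-- For `U = {i₁ < … < iₘ}`, the ordered product `a_{i₁} ⋯ a_{iₘ}`. -/
def aProd {M : Type*} [Ring M] {n : ℕ} (a : Fin n → M) (B : Finset (Fin n)) : M :=
  ((B.sort (· ≤ ·)).map a).prod

/-- The block of `P` containing `i`. -/
def blockOf {n : ℕ} (P : Finset (Finset (Fin n))) (i : Fin n) : Finset (Fin n) :=
  Finset.univ.filter fun x => ∃ B ∈ P, i ∈ B ∧ x ∈ B

/-- The largest elements of the blocks of `T`, in increasing order. -/
def maxElts {n : ℕ} (T : Finset (Finset (Fin n))) : List (Fin n) :=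
  (Finset.univ.filter fun i : Fin n => ∃ B ∈ T, i ∈ B ∧ ∀ x ∈ B, x ≤ i).sort (· ≤ ·)


/-! ### The recursion for `W` over a list of blocks -/

section Wick

/-- `W` evaluated on a list of arguments. -/
def wickL {M A : Type*} (W : (m : ℕ) → (Fin m → M) → A) (l : List M) : A :=
  W l.length l.get

lemma wickL_ofFn {M A : Type*} (W : (m : ℕ) → (Fin m → M) → A) {m : ℕ} (b : Fin m → M) :
    wickL W (List.ofFn b) = W m b := by
  have key : ∀ (l : List M) (h : l.length = m),
      W l.length l.get = W m (fun i => l.get (i.cast h.symm)) := by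
    intro l h; subst h; rfl
  rw [wickL, key _ (List.length_ofFn (f := b))]
  congr 1
  funext i
  simp

lemma erase_ofFn {β : Type*} [DecidableEq β] : ∀ {m : ℕ} (c : Fin (m + 1) → β) (_ : Function.Injective c)
    (i : Fin (m + 1)), (List.ofFn c).erase (c i) = List.ofFn (i.removeNth c) := by
  intro m
  induction m with
  | zero =>
    intro c _ i
    obtain rfl : i = 0 := Fin.fin_one_eq_zero i
    simp
  | succ m ih =>
    intro c hc i
    rw [List.ofFn_succ]
    refine Fin.cases ?_ (fun i => ?_) i
    · simp only [List.erase_cons_head, Fin.removeNth_zero]; rfl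
    · rw [List.erase_cons_tail (by simpa using fun h => (Fin.succ_ne_zero i (hc h).symm))]
      rw [ih (fun i => c i.succ) (fun p q h => Fin.succ_injective _ (hc h)) i, List.ofFn_succ (f := i.succ.removeNth c)]
      simp [Fin.removeNth, funext_iff]

/-- For a symmetric summand, twice the sum over pairs `i < j` is the sum over ordered pairs of
distinct indices. -/
lemma sum_lt_swap {A : Type*} [AddCommMonoid A] {m : ℕ} (g : Fin m → Fin m → A)
    (hg : ∀ i j, g i j = g j i) :
    (∑ j, ∑ i, if i < j then g j i else 0) + (∑ j, ∑ i, if i < j then g j i else 0)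
      = ∑ j, ∑ i ∈ univ.erase j, g j i := by
  nth_rw 2 [Finset.sum_comm]
  rw [← Finset.sum_add_distrib]
  refine Finset.sum_congr rfl fun j _ => ?_
  rw [← Finset.sum_add_distrib, ← Finset.filter_ne' univ j, Finset.sum_filter]
  refine Finset.sum_congr rfl fun i _ => ?_
  rcases lt_trichotomy i j with h | h | h
  · simp [h, h.not_gt, h.ne]
  · simp [h]
  · simp [h, h.not_gt, h.ne', hg i j]

variable {M β : Type*} [DecidableEq β] [CommRing M] [Algebra ℂ M]

/-- The three cases of the recursion combined and solved for the product with `X x`. The arguments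
of `W` are the images under `f` of distinct labels `l`, so that the terms are indexed by labels
rather than by positions; commutativity of `M` merges the two sums over pairs `i < j` into one sum
over ordered pairs. -/
lemma wick_rec (E : M →ₗ[ℂ] ℂ)
    (W : (m : ℕ) → (Fin m → M) → TensorAlgebra ℂ M)
    (hW0 : ∀ a : Fin 0 → M, W 0 a = 1)
    (hW1 : ∀ a : Fin 1 → M,
      W 1 a = W 0 (Fin.init a) * TensorAlgebra.ι ℂ (a 0)
        - E (a 0) • W 0 (Fin.init a))
    (hW2 : ∀ a : Fin 2 → M,
      W 2 a =
        W 1 (Fin.init a) * TensorAlgebra.ι ℂ (a 1)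
          - E (a 1) • W 1 (Fin.init a)
          - ∑ i : Fin 1, W 1 (Fin.snoc (i.removeNth (Fin.init a)) (a i.castSucc * a 1))
          - ∑ i : Fin 1, W 1 (Fin.snoc (i.removeNth (Fin.init a)) (a 1 * a i.castSucc))
          - ∑ i : Fin 1, E (a i.castSucc * a 1) • W 0 (i.removeNth (Fin.init a)))
    (hWrec : ∀ (m : ℕ) (a : Fin (m + 3) → M),
      W (m + 3) a =
        W (m + 2) (Fin.init a) * TensorAlgebra.ι ℂ (a (Fin.last (m + 2)))
          - E (a (Fin.last (m + 2))) • W (m + 2) (Fin.init a)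
          - ∑ i : Fin (m + 2),
              W (m + 2) (Fin.snoc (i.removeNth (Fin.init a))
                (a i.castSucc * a (Fin.last (m + 2))))
          - ∑ i : Fin (m + 2),
              W (m + 2) (Fin.snoc (i.removeNth (Fin.init a))
                (a (Fin.last (m + 2)) * a i.castSucc))
          - ∑ i : Fin (m + 2),
              E (a i.castSucc * a (Fin.last (m + 2))) • W (m + 1) (i.removeNth (Fin.init a))
          - ∑ j : Fin (m + 2), ∑ i : Fin (m + 1),
              (if i.castSucc < j then
                W (m + 1) (Fin.snoc (i.removeNth (j.removeNth (Fin.init a)))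
                  (a i.castSucc.castSucc * a (Fin.last (m + 2)) * a j.castSucc))
              else 0)
          - ∑ j : Fin (m + 2), ∑ i : Fin (m + 1),
              (if i.castSucc < j then
                W (m + 1) (Fin.snoc (i.removeNth (j.removeNth (Fin.init a)))
                  (a j.castSucc * a (Fin.last (m + 2)) * a i.castSucc.castSucc))
              else 0))
    (f : β → M) (l : List β) (hl : l.Nodup) (x : M) :
    wickL W (l.map f) * TensorAlgebra.ι ℂ x =
      wickL W (l.map f ++ [x]) + E x • wickL W (l.map f)
      + (∑ V ∈ l.toFinset, wickL W ((l.erase V).map f ++ [f V * x])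
        + ∑ V ∈ l.toFinset, wickL W ((l.erase V).map f ++ [f V * x]))
      + ∑ V ∈ l.toFinset, E (f V * x) • wickL W ((l.erase V).map f)
      + ∑ V ∈ l.toFinset, ∑ V' ∈ l.toFinset.erase V,
          wickL W (((l.erase V).erase V').map f ++ [f V * f V' * x]) := by
  obtain ⟨m, c, rfl⟩ : ∃ m, ∃ c : Fin m → β, l = List.ofFn c := ⟨l.length, l.get, by simp⟩
  have hc : Function.Injective c := List.nodup_ofFn.mp hl
  have hfin : (List.ofFn c).toFinset = univ.map ⟨c, hc⟩ := by
    ext; simp [List.mem_ofFn]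
  have hsnoc : ∀ {k : ℕ} (d : Fin k → M) (y : M),
      List.ofFn d ++ [y] = List.ofFn (Fin.snoc d y : Fin (k + 1) → M) := by
    intro k d y
    rw [List.ofFn_succ']
    simp
  have hwick : ∀ {k : ℕ} (d : Fin k → β) (y : M), wickL W ((List.ofFn d).map f ++ [y])
      = W (k + 1) (Fin.snoc (fun i => f (d i)) y) := by
    intro k d y
    rw [List.map_ofFn, hsnoc, wickL_ofFn]; rfl
  have hwick' : ∀ {k : ℕ} (d : Fin k → β), wickL W ((List.ofFn d).map f)
      = W k (fun i => f (d i)) := by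
    intro k d
    rw [List.map_ofFn, wickL_ofFn]; rfl
  rw [hfin]
  have herase : ∀ V, (univ.map ⟨c, hc⟩ : Finset β).erase (c V) = (univ.erase V).map ⟨c, hc⟩ := by
    intro V; rw [Finset.map_erase]; rfl
  simp only [Finset.sum_map, Function.Embedding.coeFn_mk, herase]
  rw [hwick, hwick']
  match m, c, hc with
  | 0, c, hc =>
    rw [hW1]
    simp [hW0, Fin.snoc]
  | 1, c, hc =>
    rw [hW2]
    have hR : ∀ i y, wickL W (((List.ofFn c).erase (c i)).map f ++ [y])
        = W 1 (Fin.snoc (i.removeNth fun i => f (c i)) y) := by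
      intro i y; rw [erase_ofFn c hc, hwick]; rfl
    have hR' : ∀ i, wickL W (((List.ofFn c).erase (c i)).map f)
        = W 0 (i.removeNth fun i => f (c i)) := by
      intro i; rw [erase_ofFn c hc, hwick']; rfl
    have h1 : (Fin.snoc (fun i => f (c i)) x : Fin 2 → M) 1 = x := rfl
    simp only [hR, hR', Fin.init_snoc, h1, Fin.snoc_castSucc, mul_comm x]
    simp
    abel
  | m + 2, c, hc =>
    have hsw := sum_lt_swap (fun j i : Fin (m + 2) =>
      wickL W ((((List.ofFn c).erase (c j)).erase (c i)).map f ++ [f (c j) * f (c i) * x]))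
      (fun i j => by rw [List.erase_comm, mul_comm (f (c i))])
    rw [← hsw, hWrec]
    have h2 : ∀ (j : Fin (m + 2)), 
        (∑ i, if i < j then wickL W ((((List.ofFn c).erase (c j)).erase (c i)).map f ++ [f (c j) * f (c i) * x]) else 0)
        = ∑ i : Fin (m + 1), if i.castSucc < j then
           W (m + 1) (Fin.snoc (i.removeNth (j.removeNth (fun i => f (c i)))) (f (c j) * f (c i.castSucc) * x)) else 0 := by
      intro j
      rw [Fin.sum_univ_castSucc, if_neg (not_lt.mpr (Fin.le_last j)), add_zero]
      refine Finset.sum_congr rfl fun i _ => ?_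
      split_ifs with hij
      · have h3 : c i.castSucc = j.removeNth c i := by
          simp [Fin.removeNth, Fin.succAbove_of_castSucc_lt _ _ hij]
        rw [erase_ofFn c hc, h3, erase_ofFn (j.removeNth c) (hc.comp Fin.succAbove_right_injective), hwick]
        rfl
      · rfl
    simp only [h2]
    have hR : ∀ i y, wickL W (((List.ofFn c).erase (c i)).map f ++ [y])
        = W (m + 2) (Fin.snoc (i.removeNth fun i => f (c i)) y) := by
      intro i y; rw [erase_ofFn c hc, hwick]; rfl
    have hR' : ∀ i, wickL W (((List.ofFn c).erase (c i)).map f)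
        = W (m + 1) (i.removeNth fun i => f (c i)) := by
      intro i; rw [erase_ofFn c hc, hwick']; rfl
    simp only [hR, hR', Fin.init_snoc, Fin.snoc_last, Fin.snoc_castSucc]
    have e1 : ∀ p q : M, p * x * q = p * q * x := fun p q => by ring
    simp only [e1, mul_comm x]
    have h4 : ∀ (j : Fin (m + 2)) (i : Fin (m + 1)), f (c i.castSucc) * f (c j) * x = f (c j) * f (c i.castSucc) * x :=
      fun i j => by ring
    simp only [h4]
    abel

end Wick

/-! ### Sums over incomplete partitions -/

section Blocks

variable {n : ℕ}

/-- `P` is a partition of `s ⊆ Fin n` into nonempty blocks. -/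
def IsPart (s : Finset (Fin n)) (P : Finset (Finset (Fin n))) : Prop :=
  (∀ A ∈ P, A.Nonempty) ∧ (∀ A ∈ P, ∀ B ∈ P, ∀ i ∈ A, i ∈ B → A = B) ∧
    ∀ i, i ∈ s ↔ ∃ A ∈ P, i ∈ A

/-- Incomplete partitions of `s`, encoded as the pair (closed blocks, open blocks). -/
def IP (s : Finset (Fin n)) : Finset (Finset (Finset (Fin n)) × Finset (Finset (Fin n))) :=
  univ.filter fun p => Disjoint p.1 p.2 ∧ IsPart s (p.1 ∪ p.2)

lemma mem_IP {s : Finset (Fin n)} {p : Finset (Finset (Fin n)) × Finset (Finset (Fin n))} :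
    p ∈ IP s ↔ Disjoint p.1 p.2 ∧ IsPart s (p.1 ∪ p.2) := by
  simp [IP]

lemma isPart_insert {s V : Finset (Fin n)} {P : Finset (Finset (Fin n))} (hV : V ∉ P) :
    IsPart s (insert V P) ↔ V.Nonempty ∧ V ⊆ s ∧ IsPart (s \ V) P := by
  constructor
  · rintro ⟨h1, h2, h3⟩
    refine ⟨h1 V (mem_insert_self _ _), fun i hi => (h3 i).2 ⟨V, mem_insert_self _ _, hi⟩,
      fun A hA => h1 A (mem_insert_of_mem hA),
      fun A hA B hB => h2 A (mem_insert_of_mem hA) B (mem_insert_of_mem hB), fun i => ?_⟩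
    rw [mem_sdiff, h3]
    constructor
    · rintro ⟨⟨A, hA, hi⟩, hiV⟩
      rcases mem_insert.1 hA with rfl | hA
      · exact absurd hi hiV
      · exact ⟨A, hA, hi⟩
    · rintro ⟨A, hA, hi⟩
      refine ⟨⟨A, mem_insert_of_mem hA, hi⟩, fun hiV => hV ?_⟩
      rwa [h2 V (mem_insert_self _ _) A (mem_insert_of_mem hA) i hiV hi]
  · rintro ⟨hne, hs, h1, h2, h3⟩
    have h4 : ∀ A ∈ P, ∀ i ∈ A, i ∉ V := fun A hA i hi =>
      (mem_sdiff.1 ((h3 i).2 ⟨A, hA, hi⟩)).2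
    refine ⟨fun A hA => ?_, fun A hA B hB i hiA hiB => ?_, fun i => ?_⟩
    · rcases mem_insert.1 hA with rfl | hA
      exacts [hne, h1 A hA]
    · rcases mem_insert.1 hA with hA' | hA' <;> rcases mem_insert.1 hB with hB' | hB'
      · rw [hA', hB']
      · exact absurd (hA' ▸ hiA) (h4 B hB' i hiB)
      · exact absurd (hB' ▸ hiB) (h4 A hA' i hiA)
      · exact h2 A hA' B hB' i hiA hiB
    · constructor
      · intro hi
        by_cases hiV : i ∈ V
        · exact ⟨V, mem_insert_self _ _, hiV⟩
        · obtain ⟨A, hA, h⟩ := (h3 i).1 (mem_sdiff.2 ⟨hi, hiV⟩)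
          exact ⟨A, mem_insert_of_mem hA, h⟩
      · rintro ⟨A, hA, hi⟩
        rcases mem_insert.1 hA with rfl | hA
        · exact hs hi
        · exact (mem_sdiff.1 ((h3 i).2 ⟨A, hA, hi⟩)).1

lemma not_mem_of_isPart {s V : Finset (Fin n)} {P : Finset (Finset (Fin n))}
    (hP : IsPart (s \ V) P) : V ∉ P := by
  intro hV
  obtain ⟨i, hi⟩ := hP.1 V hV
  exact (mem_sdiff.1 ((hP.2.2 i).2 ⟨V, hV, hi⟩)).2 hi

lemma swap_mem_IP {s : Finset (Fin n)} {p : Finset (Finset (Fin n)) × Finset (Finset (Fin n))} :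
    p.swap ∈ IP s ↔ p ∈ IP s := by
  simp [mem_IP, disjoint_comm, union_comm]

lemma insert_mem_IP {s V : Finset (Fin n)} {C T : Finset (Finset (Fin n))} (hV : V ∉ T) :
    (C, insert V T) ∈ IP s ↔ V.Nonempty ∧ V ⊆ s ∧ (C, T) ∈ IP (s \ V) := by
  simp only [mem_IP, union_insert, disjoint_insert_right]
  constructor
  · rintro ⟨⟨h1, h2⟩, h3⟩
    rw [isPart_insert (by simp [h1, hV])] at h3
    exact ⟨h3.1, h3.2.1, h2, h3.2.2⟩
  · rintro ⟨h1, h2, h3, h4⟩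
    have := not_mem_of_isPart h4
    refine ⟨⟨fun h => this (mem_union_left _ h), h3⟩, ?_⟩
    rw [isPart_insert this]
    exact ⟨h1, h2, h4⟩

/-- Choosing an incomplete partition of `s` with a distinguished open block `V` amounts to choosing
a nonempty `V ⊆ s` and an incomplete partition of `s \ V`. -/
lemma sum_open {A : Type*} [AddCommMonoid A] (s : Finset (Fin n))
    (H : Finset (Fin n) → Finset (Finset (Fin n)) × Finset (Finset (Fin n)) → A) :
    ∑ p ∈ IP s, ∑ V ∈ p.2, H V (p.1, p.2.erase V)
      = ∑ V ∈ s.powerset.erase ∅, ∑ p ∈ IP (s \ V), H V p := by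
  rw [Finset.sum_sigma', Finset.sum_sigma']
  refine Finset.sum_bij' (fun x _ => ⟨x.2, (x.1.1, x.1.2.erase x.2)⟩)
    (fun y _ => ⟨(y.2.1, insert y.1 y.2.2), y.1⟩) ?_ ?_ ?_ ?_ ?_
  · rintro ⟨⟨C, T⟩, V⟩ h
    simp only [mem_sigma, mem_erase, mem_powerset] at h ⊢
    obtain ⟨h1, h2⟩ := h
    have := (insert_mem_IP (s := s) (C := C) (notMem_erase V T)).1 (by rwa [insert_erase h2])
    exact ⟨⟨this.1.ne_empty, this.2.1⟩, this.2.2⟩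
  · rintro ⟨V, ⟨C, T⟩⟩ h
    simp only [mem_sigma, mem_erase, mem_powerset] at h ⊢
    refine ⟨?_, mem_insert_self _ _⟩
    have hV : V ∉ T := fun hT => not_mem_of_isPart (mem_IP.1 h.2).2 (mem_union_right _ hT)
    exact (insert_mem_IP hV).2 ⟨nonempty_iff_ne_empty.2 h.1.1, h.1.2, h.2⟩
  · rintro ⟨⟨C, T⟩, V⟩ h
    simp only [mem_sigma] at h
    simp [insert_erase h.2]
  · rintro ⟨V, ⟨C, T⟩⟩ h
    simp only [mem_sigma] at h
    have hV : V ∉ T := fun hT => not_mem_of_isPart (mem_IP.1 h.2).2 (mem_union_right _ hT)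
    simp [erase_insert hV]
  · intros; rfl

lemma sum_swap_IP {A : Type*} [AddCommMonoid A] (s : Finset (Fin n))
    (G : Finset (Finset (Fin n)) × Finset (Finset (Fin n)) → A) :
    ∑ p ∈ IP s, G p.swap = ∑ p ∈ IP s, G p :=
  Finset.sum_bij' (fun p _ => p.swap) (fun p _ => p.swap) (fun _ h => swap_mem_IP.2 h)
    (fun _ h => swap_mem_IP.2 h) (by simp) (by simp) (by simp)

/-- The contributions to `sum_insert_IP` with `m` in an open block; this is `sum_open` for
`insert m s`, restricted to the distinguished blocks that contain `m`. -/
lemma sum_insert_aux {A : Type*} [AddCommMonoid A] {m : Fin n} {s : Finset (Fin n)} (hm : m ∉ s)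
    (G : Finset (Finset (Fin n)) × Finset (Finset (Fin n)) → A) :
    ∑ p ∈ IP (insert m s), ∑ V ∈ p.2, (if m ∈ V then G p else 0)
      = ∑ U ∈ s.powerset, ∑ p ∈ IP (s \ U), G (p.1, insert (insert m U) p.2) := by
  have h1 := sum_open (insert m s) (fun V p => if m ∈ V then G (p.1, insert V p.2) else 0)
  have h2 : ∑ p ∈ IP (insert m s), ∑ V ∈ p.2, (if m ∈ V then G p else 0)
      = ∑ p ∈ IP (insert m s), ∑ V ∈ p.2,
        (if m ∈ V then G (p.1, insert V (p.2.erase V)) else 0) := by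
    refine Finset.sum_congr rfl fun p _ => Finset.sum_congr rfl fun V hV => ?_
    rw [insert_erase hV]
  rw [h2, h1, Finset.sum_erase _ (by simp), Finset.sum_powerset_insert hm]
  rw [Finset.sum_eq_zero (s := s.powerset), zero_add]
  · refine Finset.sum_congr rfl fun U hU => ?_
    rw [insert_sdiff_insert, sdiff_insert_of_notMem hm]
    simp
  · intro U hU
    have : m ∉ U := fun h => hm (mem_powerset.1 hU h)
    simp [this]

/-- Incomplete partitions of `insert m s`, sorted by the block `insert m U` of `m`, which is either
open or closed. -/
lemma sum_insert_IP {A : Type*} [AddCommMonoid A] {m : Fin n} {s : Finset (Fin n)} (hm : m ∉ s)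
    (G : Finset (Finset (Fin n)) × Finset (Finset (Fin n)) → A) :
    ∑ p ∈ IP (insert m s), G p
      = ∑ U ∈ s.powerset, ∑ p ∈ IP (s \ U),
          (G (p.1, insert (insert m U) p.2) + G (insert (insert m U) p.1, p.2)) := by
  have h1 := sum_insert_aux hm G
  have h2 := sum_insert_aux hm (fun p => G p.swap)
  rw [← sum_swap_IP (insert m s)] at h2
  simp only [Finset.sum_add_distrib]
  rw [← h1]
  have h3 : ∀ U, ∑ p ∈ IP (s \ U), G (insert (insert m U) p.1, p.2)
      = ∑ p ∈ IP (s \ U), G (p.1, insert (insert m U) p.2).swap := by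
    intro U
    rw [← sum_swap_IP]
    rfl
  simp only [h3]
  rw [← h2, ← Finset.sum_add_distrib]
  refine Finset.sum_congr rfl fun p hp => ?_
  obtain ⟨hd, hP⟩ := mem_IP.1 hp
  obtain ⟨V, hV, hmV⟩ := (hP.2.2 m).1 (mem_insert_self _ _)
  have h4 : ∀ T ⊆ p.1 ∪ p.2, ∑ V ∈ T, (if m ∈ V then G p else 0) = if V ∈ T then G p else 0 := by
    intro T hT
    rw [← Finset.sum_ite_eq' T V (fun _ => G p)]
    refine Finset.sum_congr rfl fun B hB => ?_
    have : m ∈ B ↔ B = V := ⟨fun h => hP.2.1 B (hT hB) V hV m h hmV, fun h => h ▸ hmV⟩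
    simp [this]
  rw [Prod.swap_swap, Prod.snd_swap, h4 _ subset_union_right, h4 _ subset_union_left]
  rcases mem_union.1 hV with h | h
  · simp [h, disjoint_left.1 hd h]
  · simp [h, disjoint_right.1 hd h]

/-- Ordered pairs of disjoint nonempty subsets of `s`, sorted by their union `U`. -/
lemma sum_pairs {A : Type*} [AddCommMonoid A] (s : Finset (Fin n))
    (h : Finset (Fin n) → Finset (Fin n) → A) :
    ∑ V ∈ s.powerset.erase ∅, ∑ V' ∈ (s \ V).powerset.erase ∅, h V V'
      = ∑ U ∈ s.powerset.erase ∅, ∑ V ∈ (U.powerset.erase ∅).erase U, h V (U \ V) := by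
  rw [Finset.sum_sigma', Finset.sum_sigma']
  refine Finset.sum_bij' (fun x _ => ⟨x.1 ∪ x.2, x.1⟩) (fun y _ => ⟨y.2, y.1 \ y.2⟩) ?_ ?_ ?_ ?_ ?_
  · rintro ⟨V, V'⟩ hx
    simp only [mem_sigma, mem_erase, mem_powerset, ne_eq, subset_sdiff] at hx ⊢
    obtain ⟨⟨h1, h2⟩, h3, h4, h5⟩ := hx
    refine ⟨⟨by simp [h1], union_subset h2 h4⟩, fun hh => h3 ?_, h1, subset_union_left⟩
    have : V' ⊆ V := by rw [hh]; exact subset_union_right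
    exact disjoint_self_iff_empty _ |>.1 (h5.mono_right this)
  · rintro ⟨U, V⟩ hx
    simp only [mem_sigma, mem_erase, mem_powerset, ne_eq] at hx ⊢
    obtain ⟨⟨h1, h2⟩, h3, h4, h5⟩ := hx
    refine ⟨⟨h4, h5.trans h2⟩, fun hh => h3 ?_, sdiff_subset_sdiff h2 le_rfl⟩
    exact h5.antisymm (sdiff_eq_empty_iff_subset.1 hh)
  · rintro ⟨V, V'⟩ hx
    simp only [mem_sigma, mem_erase, mem_powerset, ne_eq, subset_sdiff] at hx
    simp [union_sdiff_left, hx.2.2.2.sdiff_eq_left]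
  · rintro ⟨U, V⟩ hx
    simp only [mem_sigma, mem_erase, mem_powerset, ne_eq] at hx
    simp [union_sdiff_of_subset hx.2.2.2]
  · rintro ⟨V, V'⟩ hx
    simp only [mem_sigma, mem_erase, mem_powerset, ne_eq, subset_sdiff] at hx
    simp [union_sdiff_left, hx.2.2.2.sdiff_eq_left]

/-- Including `V = ∅` and `V = U`, the sum would be `∑ j ≤ k, (k choose j) j! (k - j)! = (k + 1) k!`
with `k = |U|`. -/
lemma sum_factorial (U : Finset (Fin n)) (hU : U ≠ ∅) :
    ∑ V ∈ (U.powerset.erase ∅).erase U, (V.card.factorial : ℂ) * ((U \ V).card.factorial : ℂ)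
      + 2 * (U.card.factorial : ℂ) = ((U.card + 1).factorial : ℂ) := by
  have h1 : ∑ V ∈ U.powerset, (V.card.factorial : ℂ) * ((U \ V).card.factorial : ℂ)
      = ((U.card + 1).factorial : ℂ) := by
    have : ∀ V ∈ U.powerset, (V.card.factorial : ℂ) * ((U \ V).card.factorial : ℂ)
        = (fun j => (j.factorial : ℂ) * ((U.card - j).factorial : ℂ)) V.card := by
      intro V hV
      rw [card_sdiff_of_subset (mem_powerset.1 hV)]
    rw [Finset.sum_congr rfl this, Finset.sum_powerset_apply_card
      (fun j => (j.factorial : ℂ) * ((U.card - j).factorial : ℂ))]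
    have h2 : ∀ j ∈ range (U.card + 1),
        U.card.choose j • ((j.factorial : ℂ) * ((U.card - j).factorial : ℂ))
          = (U.card.factorial : ℂ) := by
      intro j hj
      rw [nsmul_eq_mul, ← Nat.choose_mul_factorial_mul_factorial
        (Nat.lt_succ_iff.1 (mem_range.1 hj))]
      push_cast; ring
    rw [Finset.sum_congr rfl h2, Nat.factorial_succ]
    simp
  rw [← h1, ← Finset.sum_erase_add (s := U.powerset) (a := ∅) _ (by simp),
    ← Finset.sum_erase_add (s := U.powerset.erase ∅) (a := U) _ (by simp [hU])]
  simp
  ring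

/-! ### Ordering the blocks by their largest elements -/

/-- `T` consists of nonempty, pairwise disjoint blocks. -/
def Good (T : Finset (Finset (Fin n))) : Prop :=
  (∀ A ∈ T, A.Nonempty) ∧ ∀ A ∈ T, ∀ B ∈ T, ∀ i ∈ A, i ∈ B → A = B

lemma Good.mono {T T' : Finset (Finset (Fin n))} (h : Good T) (hT : T' ⊆ T) : Good T' :=
  ⟨fun A hA => h.1 A (hT hA), fun A hA B hB => h.2 A (hT hA) B (hT hB)⟩

lemma good_of_mem_IP {s : Finset (Fin n)} {p : Finset (Finset (Fin n)) × Finset (Finset (Fin n))}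
    (hp : p ∈ IP s) : Good p.2 :=
  Good.mono ⟨(mem_IP.1 hp).2.1, (mem_IP.1 hp).2.2.1⟩ subset_union_right

/-- The blocks of `T` in increasing order of their largest elements. -/
def blockList (T : Finset (Finset (Fin n))) : List (Finset (Fin n)) :=
  (maxElts T).map (blockOf T)

lemma blockOf_eq {T : Finset (Finset (Fin n))} (hT : Good T) {A : Finset (Fin n)} (hA : A ∈ T)
    {i : Fin n} (hi : i ∈ A) : blockOf T i = A := by
  ext x
  simp only [blockOf, mem_filter, mem_univ, true_and]
  constructor
  · rintro ⟨B, hB, hiB, hx⟩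
    rwa [hT.2 A hA B hB i hi hiB]
  · intro hx
    exact ⟨A, hA, hi, hx⟩

lemma mem_maxElts {T : Finset (Finset (Fin n))} {i : Fin n} :
    i ∈ maxElts T ↔ ∃ B ∈ T, B.max = i := by
  simp only [maxElts, mem_sort, mem_filter, mem_univ, true_and]
  refine exists_congr fun B => and_congr_right fun _ => ⟨fun h => ?_, fun h => ?_⟩
  · exact le_antisymm (Finset.max_le fun x hx => WithBot.coe_le_coe.2 (h.2 x hx)) (le_max h.1)
  · exact ⟨mem_of_max h, fun x hx => le_max_of_eq hx h⟩

lemma pairwise_blockList {T : Finset (Finset (Fin n))} (hT : Good T) :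
    (blockList T).Pairwise (fun A B => A.max < B.max) := by
  rw [blockList, List.pairwise_map]
  have h : ∀ i ∈ maxElts T, (blockOf T i).max = i := by
    intro i hi
    obtain ⟨B, hB, hBi⟩ := mem_maxElts.1 hi
    rw [blockOf_eq hT hB (mem_of_max hBi), hBi]
  have hs : (maxElts T).Pairwise (· < ·) := (Finset.sortedLT_sort _).pairwise
  refine hs.imp_of_mem fun {i j} hi hj hij => ?_
  rw [h i hi, h j hj]
  exact WithBot.coe_lt_coe.2 hij

lemma mem_blockList {T : Finset (Finset (Fin n))} (hT : Good T) {A : Finset (Fin n)} :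
    A ∈ blockList T ↔ A ∈ T := by
  simp only [blockList, List.mem_map, mem_maxElts]
  constructor
  · rintro ⟨i, ⟨B, hB, hBi⟩, rfl⟩
    rwa [blockOf_eq hT hB (mem_of_max hBi)]
  · intro hA
    obtain ⟨i, hi⟩ := max_of_nonempty (hT.1 A hA)
    exact ⟨i, ⟨A, hA, hi⟩, blockOf_eq hT hA (mem_of_max hi)⟩

lemma nodup_of_pairwise_max {l : List (Finset (Fin n))}
    (h : l.Pairwise (fun A B => A.max < B.max)) : l.Nodup :=
  h.imp fun h => by rintro rfl; exact lt_irrefl _ h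

/-- Strict ordering by largest elements determines the list, so erasing or appending a block can be
checked on members only. -/
lemma blockList_unique {T : Finset (Finset (Fin n))} (hT : Good T) {l : List (Finset (Fin n))}
    (hl : l.Pairwise (fun A B => A.max < B.max)) (hm : ∀ A, A ∈ l ↔ A ∈ T) :
    l = blockList T := by
  refine List.Perm.eq_of_pairwise (le := fun A B => A.max < B.max) ?_ hl (pairwise_blockList hT) ?_
  · intro A B _ _ h1 h2
    exact absurd h1 h2.not_gt
  · rw [List.perm_ext_iff_of_nodup (nodup_of_pairwise_max hl)
      (nodup_of_pairwise_max (pairwise_blockList hT))]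
    intro A
    rw [hm, mem_blockList hT]

lemma blockList_erase {T : Finset (Finset (Fin n))} (hT : Good T) (V : Finset (Fin n)) :
    (blockList T).erase V = blockList (T.erase V) := by
  refine blockList_unique (hT.mono (erase_subset _ _))
    ((pairwise_blockList hT).sublist List.erase_sublist) fun A => ?_
  rw [(nodup_of_pairwise_max (pairwise_blockList hT)).mem_erase_iff, mem_blockList hT, mem_erase]

lemma blockList_insert {T : Finset (Finset (Fin n))} {V : Finset (Fin n)} (hT : Good (insert V T))
    (hV : ∀ A ∈ T, A.max < V.max) : blockList (insert V T) = blockList T ++ [V] := by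
  have hT' := hT.mono (subset_insert _ _)
  symm
  refine blockList_unique hT ?_ fun A => ?_
  · rw [List.pairwise_append]
    refine ⟨pairwise_blockList hT', by simp, fun A hA B hB => ?_⟩
    rw [List.mem_singleton.1 hB]
    exact hV A ((mem_blockList hT').1 hA)
  · simp [mem_blockList hT', or_comm]

end Blocks

/-! ### The expansion for initial segments -/

section Main

lemma aProd_eq {M : Type*} [CommRing M] {n : ℕ} (a : Fin n → M) (B : Finset (Fin n)) : aProd a B = ∏ i ∈ B, a i := by
  rw [aProd, ← Multiset.prod_coe, ← Multiset.map_coe, Finset.sort_eq]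
  rfl

variable {M : Type*} [CommRing M] [Algebra ℂ M] {n : ℕ}

/-- The coefficient of the incomplete partition with closed blocks `p.1` and open blocks `p.2`. -/
def wt (E : M →ₗ[ℂ] ℂ) (a : Fin n → M)
    (p : Finset (Finset (Fin n)) × Finset (Finset (Fin n))) : ℂ :=
  (∏ U ∈ p.1, ((U.card - 1).factorial : ℂ) * E (aProd a U)) * ∏ V ∈ p.2, (V.card.factorial : ℂ)

/-- The right-hand side of the expansion for the product of the `X (a i)` with `i ∈ s`. -/
def wickSum (E : M →ₗ[ℂ] ℂ) (W : (m : ℕ) → (Fin m → M) → TensorAlgebra ℂ M) (a : Fin n → M)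
    (s : Finset (Fin n)) : TensorAlgebra ℂ M :=
  ∑ p ∈ IP s, wt E a p • wickL W ((blockList p.2).map (aProd a))

lemma wt_erase (E : M →ₗ[ℂ] ℂ) (a : Fin n → M)
    (p : Finset (Finset (Fin n)) × Finset (Finset (Fin n))) {V : Finset (Fin n)} (hV : V ∈ p.2) :
    wt E a p = (V.card.factorial : ℂ) * wt E a (p.1, p.2.erase V) := by
  simp only [wt]
  rw [← Finset.mul_prod_erase _ _ hV]
  ring

/-- The induction step: the contributions to a block `insert m U` are compared for each
`U ⊆ s`. The hypothesis `hW` is the conclusion of `wick_rec`. -/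
lemma wickSum_insert (E : M →ₗ[ℂ] ℂ) (W : (m : ℕ) → (Fin m → M) → TensorAlgebra ℂ M)
    (hW : ∀ (f : Finset (Fin n) → M) (l : List (Finset (Fin n))), l.Nodup → ∀ x : M,
      wickL W (l.map f) * TensorAlgebra.ι ℂ x =
      wickL W (l.map f ++ [x]) + E x • wickL W (l.map f)
      + (∑ V ∈ l.toFinset, wickL W ((l.erase V).map f ++ [f V * x])
        + ∑ V ∈ l.toFinset, wickL W ((l.erase V).map f ++ [f V * x]))
      + ∑ V ∈ l.toFinset, E (f V * x) • wickL W ((l.erase V).map f)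
      + ∑ V ∈ l.toFinset, ∑ V' ∈ l.toFinset.erase V,
          wickL W (((l.erase V).erase V').map f ++ [f V * f V' * x]))
    (a : Fin n → M) (m : Fin n) (s : Finset (Fin n)) (hs : ∀ x ∈ s, x < m) :
    wickSum E W a s * TensorAlgebra.ι ℂ (a m) = wickSum E W a (insert m s) := by
  have hms : m ∉ s := fun h => lt_irrefl _ (hs m h)
  set K : Finset (Finset (Fin n)) × Finset (Finset (Fin n)) → M → TensorAlgebra ℂ M :=
    fun q y => wickL W ((blockList q.2).map (aProd a) ++ [y]) with hK
  set K0 : Finset (Finset (Fin n)) × Finset (Finset (Fin n)) → TensorAlgebra ℂ M :=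
    fun q => wickL W ((blockList q.2).map (aProd a)) with hK0
  obtain ⟨H2, hH2⟩ : ∃ H2 : Finset (Fin n) → Finset (Fin n) →
      Finset (Finset (Fin n)) × Finset (Finset (Fin n)) → TensorAlgebra ℂ M,
      ∀ V V' q, H2 V V' q = ((V.card.factorial : ℂ) * (V'.card.factorial : ℂ) * wt E a q) •
        K q (aProd a V * aProd a V' * a m) := ⟨_, fun _ _ _ => rfl⟩
  obtain ⟨H1, hH1⟩ : ∃ H1 : Finset (Fin n) →
      Finset (Finset (Fin n)) × Finset (Finset (Fin n)) → TensorAlgebra ℂ M,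
      ∀ V q, H1 V q = ((V.card.factorial : ℂ) * wt E a q) •
          (K q (aProd a V * a m) + K q (aProd a V * a m) + E (aProd a V * a m) • K0 q)
        + ∑ V' ∈ q.2, H2 V V' (q.1, q.2.erase V') := ⟨_, fun _ _ => rfl⟩
  -- The recursion, with each sum over blocks written so that `sum_open` applies.
  have step : ∀ p ∈ IP s, (wt E a p • K0 p) * TensorAlgebra.ι ℂ (a m)
      = (wt E a p • (K p (a m) + E (a m) • K0 p)) + ∑ V ∈ p.2, H1 V (p.1, p.2.erase V) := by
    intro p hp
    have hg := good_of_mem_IP hp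
    have htf : (blockList p.2).toFinset = p.2 := by
      ext A; rw [List.mem_toFinset, mem_blockList hg]
    have := hW (aProd a) (blockList p.2) (nodup_of_pairwise_max (pairwise_blockList hg)) (a m)
    rw [smul_mul_assoc, hK0, this, htf]
    have he : ∀ V, (blockList p.2).erase V = blockList (p.2.erase V) := blockList_erase hg
    have he' : ∀ V V', (blockList (p.2.erase V)).erase V' = blockList ((p.2.erase V).erase V') :=
      fun V => blockList_erase (hg.mono (erase_subset _ _))
    simp only [hH1, hH2, hK, he, he', smul_add, Finset.smul_sum, Finset.sum_add_distrib]
    have e1 : ∀ f : Finset (Fin n) → TensorAlgebra ℂ M, ∑ V ∈ p.2, wt E a p • f V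
        = ∑ V ∈ p.2, ((V.card.factorial : ℂ) * wt E a (p.1, p.2.erase V)) • f V := fun f =>
      Finset.sum_congr rfl fun V hV => by rw [← wt_erase E a p hV]
    have e2 : ∀ f : Finset (Fin n) → Finset (Fin n) → TensorAlgebra ℂ M,
        ∑ V ∈ p.2, ∑ V' ∈ p.2.erase V, wt E a p • f V V'
        = ∑ V ∈ p.2, ∑ V' ∈ p.2.erase V, ((V.card.factorial : ℂ) * (V'.card.factorial : ℂ) *
          wt E a (p.1, (p.2.erase V).erase V')) • f V V' := fun f =>
      Finset.sum_congr rfl fun V hV => Finset.sum_congr rfl fun V' hV' => by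
        rw [wt_erase E a p hV, wt_erase E a (p.1, p.2.erase V) hV', mul_assoc]
    rw [e1, e1, e2]
    abel
  have hsd2 : ∀ V V', (s \ V) \ V' = s \ (V ∪ V') := fun V V' => by
    ext i; simp only [mem_sdiff, mem_union]; tauto
  rw [wickSum, Finset.sum_mul, Finset.sum_congr rfl step, Finset.sum_add_distrib, sum_open s H1]
  simp only [hH1]
  simp only [Finset.sum_add_distrib, sum_open _ (H2 _), hsd2]
  rw [sum_pairs s (fun V V' => ∑ q ∈ IP (s \ (V ∪ V')), H2 V V' q), wickSum, sum_insert_IP hms]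
  simp only [hH2]
  have hterm : ∀ U ∈ s.powerset, ∀ q ∈ IP (s \ U),
      wt E a (q.1, insert (insert m U) q.2) •
          wickL W ((blockList (insert (insert m U) q.2)).map (aProd a))
        + wt E a (insert (insert m U) q.1, q.2) • K0 q
      = (((U.card + 1).factorial : ℂ) * wt E a q) • K q (aProd a U * a m)
        + ((U.card.factorial : ℂ) * wt E a q) • (E (aProd a U * a m) • K0 q) := by
    intro U hU q hq
    have hUs := mem_powerset.1 hU
    have hmU : m ∉ U := fun h => hms (hUs h)
    have hsd : insert m s \ insert m U = s \ U := by
      rw [insert_sdiff_insert, sdiff_insert_of_notMem hms]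
    have hP := (mem_IP.1 hq).2
    have hnm := not_mem_of_isPart (hsd.symm ▸ hP)
    have hT : insert m U ∉ q.2 := fun h => hnm (mem_union_right _ h)
    have hC : insert m U ∉ q.1 := fun h => hnm (mem_union_left _ h)
    have hin : (q.1, insert (insert m U) q.2) ∈ IP (insert m s) := by
      rw [insert_mem_IP hT, hsd]
      exact ⟨insert_nonempty _ _, insert_subset_insert _ hUs, hq⟩
    have hmax : (insert m U).max = m := by
      refine le_antisymm (Finset.max_le fun x hx => WithBot.coe_le_coe.2 ?_)
        (le_max (mem_insert_self _ _))
      rcases mem_insert.1 hx with rfl | hx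
      exacts [le_rfl, (hs x (hUs hx)).le]
    have hlt : ∀ A ∈ q.2, A.max < (insert m U).max := by
      intro A hA
      obtain ⟨i, hi⟩ := max_of_nonempty (hP.1 A (mem_union_right _ hA))
      rw [hmax, hi]
      exact WithBot.coe_lt_coe.2
        (hs i (mem_sdiff.1 ((hP.2.2 i).2 ⟨A, mem_union_right _ hA, mem_of_max hi⟩)).1)
    have hprod : aProd a (insert m U) = aProd a U * a m := by
      rw [aProd_eq, aProd_eq, Finset.prod_insert hmU, mul_comm]
    rw [blockList_insert (good_of_mem_IP hin) hlt]
    simp only [wt, Finset.prod_insert hT, Finset.prod_insert hC, card_insert_of_notMem hmU,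
      hprod, List.map_append, List.map_cons, List.map_nil, hK, smul_smul, Nat.add_sub_cancel]
    congr 2 <;> ring
  rw [Finset.sum_congr rfl fun U hU => Finset.sum_congr rfl (hterm U hU)]
  -- `U = ∅` corresponds to the singleton block `{m}`, coming from the first two recursion terms.
  rw [← Finset.add_sum_erase s.powerset _ (empty_mem_powerset s)]
  congr 1
  · refine Finset.sum_congr (by simp) fun q _ => ?_
    simp [aProd_eq]
  · rw [← Finset.sum_add_distrib]
    refine Finset.sum_congr rfl fun U hU => ?_
    obtain ⟨hU0, hUs⟩ := mem_erase.1 hU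
    have h5 : ∀ V ∈ (U.powerset.erase ∅).erase U, ∑ q ∈ IP (s \ (V ∪ U \ V)),
        ((V.card.factorial : ℂ) * ((U \ V).card.factorial : ℂ) * wt E a q) •
                K q (aProd a V * aProd a (U \ V) * a m)
        = ∑ q ∈ IP (s \ U), (((V.card.factorial : ℂ) * ((U \ V).card.factorial : ℂ)) * wt E a q) •
                K q (aProd a U * a m) := by
      intro V hV
      have hVU : V ⊆ U := mem_powerset.1 (mem_of_mem_erase (mem_of_mem_erase hV))
      have e1 : V ∪ U \ V = U := union_sdiff_of_subset hVU
      have e2 : aProd a V * aProd a (U \ V) = aProd a U := by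
        simp only [aProd_eq]
        rw [mul_comm, Finset.prod_sdiff hVU]
      rw [e1, e2]
    rw [Finset.sum_congr rfl h5, Finset.sum_comm, ← Finset.sum_add_distrib]
    refine Finset.sum_congr rfl fun q _ => ?_
    rw [← Finset.sum_smul, ← Finset.sum_mul, ← sum_factorial U hU0]
    module

lemma IP_empty : IP (∅ : Finset (Fin n)) = {(∅, ∅)} := by
  ext ⟨C, T⟩
  rw [mem_IP, mem_singleton]
  constructor
  · rintro ⟨-, h1, -, h3⟩
    have : C ∪ T = ∅ := by
      by_contra hne
      obtain ⟨A, hA⟩ := nonempty_iff_ne_empty.2 hne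
      obtain ⟨i, hi⟩ := h1 A hA
      exact notMem_empty i ((h3 i).2 ⟨A, hA, hi⟩)
    rw [union_eq_empty] at this
    rw [this.1, this.2]
  · intro h
    obtain ⟨rfl, rfl⟩ := Prod.mk.inj h
    simp [IsPart]

lemma isPartition_iff {P : Finset (Finset (Fin n))} : IsPartition P ↔ IsPart univ P := by
  refine and_congr_right fun _ => ⟨fun h => ⟨fun A hA B hB i hiA hiB => ?_, fun i => ?_⟩,
    fun h i => ?_⟩
  · exact (h i).unique ⟨hA, hiA⟩ ⟨hB, hiB⟩
  · obtain ⟨A, hA, -⟩ := h i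
    simpa using ⟨A, hA⟩
  · obtain ⟨A, hA, hi⟩ := (h.2 i).1 (mem_univ _)
    exact ⟨A, ⟨hA, hi⟩, fun B hB => h.1 B hB.1 A hA i hB.2 hi⟩

/-- Incomplete partitions as pairs `(π, S)` and as pairs `(π \ S, S)`. -/
lemma sum_IP_univ {A : Type*} [AddCommMonoid A]
    (G : Finset (Finset (Fin n)) → Finset (Finset (Fin n)) → A) :
    ∑ π ∈ univ.filter (fun π : Finset (Finset (Fin n)) => IsPartition π),
      ∑ S ∈ π.powerset, G (π \ S) S = ∑ p ∈ IP (univ : Finset (Fin n)), G p.1 p.2 := by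
  rw [Finset.sum_sigma']
  refine Finset.sum_bij' (fun x _ => (x.1 \ x.2, x.2)) (fun p _ => ⟨p.1 ∪ p.2, p.2⟩) ?_ ?_ ?_ ?_ ?_
  · rintro ⟨π, S⟩ h
    simp only [mem_sigma, mem_filter, mem_univ, true_and, mem_powerset] at h
    rw [mem_IP]
    refine ⟨sdiff_disjoint, ?_⟩
    simp only [sdiff_union_of_subset h.2]
    exact isPartition_iff.1 h.1
  · rintro ⟨C, T⟩ h
    simp only [mem_sigma, mem_filter, mem_univ, true_and, mem_powerset]
    exact ⟨isPartition_iff.2 (mem_IP.1 h).2, subset_union_right⟩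
  · rintro ⟨π, S⟩ h
    simp only [mem_sigma, mem_powerset] at h
    simp [union_eq_left.2 h.2]
  · rintro ⟨C, T⟩ h
    simp [union_sdiff_right, (mem_IP.1 h).1.sdiff_eq_left]
  · intros; rfl

end Main

theorem stmt13 {M : Type*} [CommRing M] [Algebra ℂ M] (E : M →ₗ[ℂ] ℂ)
    (W : (m : ℕ) → (Fin m → M) → TensorAlgebra ℂ M)
    (hW0 : ∀ a : Fin 0 → M, W 0 a = 1)
    (hW1 : ∀ a : Fin 1 → M,
      W 1 a = W 0 (Fin.init a) * TensorAlgebra.ι ℂ (a 0)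
        - E (a 0) • W 0 (Fin.init a))
    (hW2 : ∀ a : Fin 2 → M,
      W 2 a =
        W 1 (Fin.init a) * TensorAlgebra.ι ℂ (a 1)
          - E (a 1) • W 1 (Fin.init a)
          - ∑ i : Fin 1, W 1 (Fin.snoc (i.removeNth (Fin.init a)) (a i.castSucc * a 1))
          - ∑ i : Fin 1, W 1 (Fin.snoc (i.removeNth (Fin.init a)) (a 1 * a i.castSucc))
          - ∑ i : Fin 1, E (a i.castSucc * a 1) • W 0 (i.removeNth (Fin.init a)))
    (hWrec : ∀ (m : ℕ) (a : Fin (m + 3) → M),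
      W (m + 3) a =
        W (m + 2) (Fin.init a) * TensorAlgebra.ι ℂ (a (Fin.last (m + 2)))
          - E (a (Fin.last (m + 2))) • W (m + 2) (Fin.init a)
          - ∑ i : Fin (m + 2),
              W (m + 2) (Fin.snoc (i.removeNth (Fin.init a))
                (a i.castSucc * a (Fin.last (m + 2))))
          - ∑ i : Fin (m + 2),
              W (m + 2) (Fin.snoc (i.removeNth (Fin.init a))
                (a (Fin.last (m + 2)) * a i.castSucc))
          - ∑ i : Fin (m + 2),
              E (a i.castSucc * a (Fin.last (m + 2))) • W (m + 1) (i.removeNth (Fin.init a))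
          - ∑ j : Fin (m + 2), ∑ i : Fin (m + 1),
              (if i.castSucc < j then
                W (m + 1) (Fin.snoc (i.removeNth (j.removeNth (Fin.init a)))
                  (a i.castSucc.castSucc * a (Fin.last (m + 2)) * a j.castSucc))
              else 0)
          - ∑ j : Fin (m + 2), ∑ i : Fin (m + 1),
              (if i.castSucc < j then
                W (m + 1) (Fin.snoc (i.removeNth (j.removeNth (Fin.init a)))
                  (a j.castSucc * a (Fin.last (m + 2)) * a i.castSucc.castSucc))
              else 0))
    (n : ℕ) (a : Fin n → M) :
    (List.ofFn fun i => TensorAlgebra.ι ℂ (a i)).prod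
      = ∑ π ∈ Finset.univ.filter (fun π : Finset (Finset (Fin n)) => IsPartition π),
          ∑ S ∈ π.powerset,
            ((∏ U ∈ π \ S, ((U.card - 1).factorial : ℂ) * E (aProd a U))
                * ∏ V ∈ S, (V.card.factorial : ℂ)) •
              W (maxElts S).length (fun j => aProd a (blockOf S ((maxElts S).get j))) := by
  have hfinal : ∀ k ≤ n, ((List.ofFn fun i => TensorAlgebra.ι ℂ (a i)).take k).prod
      = wickSum E W a (univ.filter fun i : Fin n => i.val < k) := by
    intro k
    induction k with
    | zero =>
      intro _
      have : maxElts (∅ : Finset (Finset (Fin n))) = [] := by simp [maxElts]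
      have hw : wickL W ([] : List M) = 1 := hW0 _
      simp only [wickSum, wt, blockList]
      simp [IP_empty, this, hw]
    | succ k ih =>
      intro hk
      have hins : (univ.filter fun i : Fin n => i.val < k + 1)
          = insert ⟨k, hk⟩ (univ.filter fun i : Fin n => i.val < k) := by
        ext i
        simp only [mem_filter, mem_univ, true_and, mem_insert, Fin.ext_iff]
        omega
      rw [List.prod_take_succ _ _ (by simpa using hk), ih (by omega), hins,
        ← wickSum_insert E W
          (fun f l hl x => wick_rec E W hW0 hW1 hW2 hWrec f l hl x) a ⟨k, hk⟩ _
          (fun x hx => by simpa [Fin.lt_def] using hx)]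
      simp
  have h := hfinal n le_rfl
  rw [List.take_of_length_le (by simp)] at h
  rw [h, sum_IP_univ (fun C S => ((∏ U ∈ C, ((U.card - 1).factorial : ℂ) * E (aProd a U))
                * ∏ V ∈ S, (V.card.factorial : ℂ)) •
              W (maxElts S).length (fun j => aProd a (blockOf S ((maxElts S).get j))))]
  have hu : (univ.filter fun i : Fin n => i.val < n) = univ := by simp
  rw [hu, wickSum]
  refine Finset.sum_congr rfl fun p _ => ?_
  rw [← wickL_ofFn W (fun j => aProd a (blockOf p.2 ((maxElts p.2).get j))), wt]
  congr 2
  rw [blockList, List.map_map]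
  exact (List.ext_get (by simp) (by simp))
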